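/- Let S = {1,3,9,13} and r = 2^{22}−4. Then s̃(r,S) = 8 and the unique r-tiling sequence with tiles in S of length 8 is (2,13),(3,9),(7,13),(8,9),(12,13),(13,9),(17,13),(18,9); that is, 2^{22}−4 = 9·2^{18}+13·2^{17}+9·2^{13}+13·2^{12}+9·2^{8}+13·2^{7}+9·2^{3}+13·2^{2} and K̃(r,S) consists of exactly this one sequence. -/

import Mathlib

open scoped BigOperators

/-- `s(n)`: the number of 1's in the binary expansion of `n`. -/
def binDigitSum (n : ℕ) : ℕ := (Nat.digits 2 n).sum

/-- An `r`-tiling sequence with tiles in `S`, recorded as a list of pairs `(b_i, ℓ_i)`: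
each `ℓ_i ∈ S`, the `b_i` are weakly increasing, `ℓ_i > ℓ_{i+1}` whenever `b_i = b_{i+1}`,
and `∑ ℓ_i·2^{b_i} = r`. -/
def IsTiling (S : Finset ℕ) (r : ℕ) (L : List (ℕ × ℕ)) : Prop :=
  (∀ p ∈ L, p.2 ∈ S) ∧
  L.Chain' (fun p q => p.1 ≤ q.1 ∧ (p.1 = q.1 → q.2 < p.2)) ∧
  (L.map fun p => p.2 * 2 ^ p.1).sum = r

/-- `s̃(r,S)`: the minimal length of an `r`-tiling sequence (`⊤` if none exists). -/
noncomputable def stilde (S : Finset ℕ) (r : ℕ) : ℕ∞ :=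
  sInf {n : ℕ∞ | ∃ L : List (ℕ × ℕ), IsTiling S r L ∧ (L.length : ℕ∞) = n}

/-- `K̃(r,S)`: the set of `r`-tiling sequences of minimal length. -/
def Ktilde (S : Finset ℕ) (r : ℕ) : Set (List (ℕ × ℕ)) :=
  {L | IsTiling S r L ∧ (L.length : ℕ∞) = stilde S r}

/-!
Since `r + 4 = 2 ^ 22`, the tiles of an `r`-tiling bring `4` up to a power of two by binary
addition. Processing the exponents upwards, the tiles placed at one exponent turn a carry `d` into a
carry `m` with `d + ∑ T = 2 * m`; the carries stay bounded. A potential `h` on the carries satisfies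
`2 + h m ≤ 5 * #T + h d` at every such step, so that completing `d` to `2 ^ k` takes at least
`(2 * k - h d) / 5` tiles, which is `8` for `d = 4` and `k = 22`. Here `2 / 5` is the density of the
cycle `1 → 7 → 8 → 4 → 2 → 1` given by `1 + 13 = 2 * 7` and `7 + 9 = 2 * 8`. As the bound is
attained, all steps of a minimal tiling are equalities, and these leave no choice along that cycle.
-/

/-- The strict order in which tiles are listed: by increasing exponent and, at equal exponents, by
decreasing size. It is the relation that `IsTiling` imposes on consecutive tiles. -/
def TilePrecedes (p q : ℕ × ℕ) : Prop :=
  p.1 ≤ q.1 ∧ (p.1 = q.1 → q.2 < p.2)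

instance : IsTrans (ℕ × ℕ) TilePrecedes where
  trans _ _ _ hpq hqr := by
    unfold TilePrecedes at *
    omega

/-- The number `∑ ℓ·2^b` covered by a list of tiles `(b, ℓ)`. -/
def tileSum (L : List (ℕ × ℕ)) : ℕ := (L.map fun p => p.2 * 2 ^ p.1).sum

@[simp]
theorem tileSum_cons (p : ℕ × ℕ) (L : List (ℕ × ℕ)) :
    tileSum (p :: L) = p.2 * 2 ^ p.1 + tileSum L := by
  simp [tileSum]

theorem tileSum_append (L L' : List (ℕ × ℕ)) :
    tileSum (L ++ L') = tileSum L + tileSum L' := by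
  simp [tileSum]

theorem two_pow_dvd_tileSum {b : ℕ} {L : List (ℕ × ℕ)} (hb : ∀ p ∈ L, b ≤ p.1) :
    2 ^ b ∣ tileSum L := by
  refine List.dvd_sum fun x hx => ?_
  obtain ⟨p, hp, rfl⟩ := List.mem_map.1 hx
  exact (pow_dvd_pow 2 (hb p hp)).mul_left _

theorem isTiling_iff_pairwise {S : Finset ℕ} {r : ℕ} {L : List (ℕ × ℕ)} :
    IsTiling S r L ↔ (∀ p ∈ L, p.2 ∈ S) ∧ L.Pairwise TilePrecedes ∧ tileSum L = r := by
  rw [← List.isChain_iff_pairwise]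
  rfl

/-- The tiles with sizes in `T`, all placed at exponent `b`, in the order of a tiling sequence. -/
def level (b : ℕ) (T : Finset ℕ) : List (ℕ × ℕ) := (T.sort (· ≥ ·)).map (Prod.mk b)

@[simp]
theorem mem_level {b : ℕ} {T : Finset ℕ} {p : ℕ × ℕ} : p ∈ level b T ↔ p.1 = b ∧ p.2 ∈ T := by
  obtain ⟨c, l⟩ := p
  simp [level, and_comm, eq_comm]

@[simp]
theorem length_level (b : ℕ) (T : Finset ℕ) : (level b T).length = T.card := by
  simp [level]

theorem tileSum_level (b : ℕ) (T : Finset ℕ) : tileSum (level b T) = (∑ l ∈ T, l) * 2 ^ b := by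
  rw [Finset.sum_mul, Finset.sum_eq_multiset_sum, ← Finset.sort_eq T (· ≥ ·), Multiset.map_coe,
    Multiset.sum_coe, tileSum, level, List.map_map]
  rfl

theorem level_insert {b l : ℕ} {T : Finset ℕ} (hl : ∀ l' ∈ T, l' < l) :
    level b (insert l T) = (b, l) :: level b T := by
  rw [level, Finset.sort_insert _ (fun l' h => (hl l' h).le) fun h => (hl l h).false]
  rfl

theorem exists_eq_level_append {b : ℕ} {L : List (ℕ × ℕ)} (hL : L.Pairwise TilePrecedes)
    (hb : ∀ p ∈ L, b ≤ p.1) :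
    ∃ T L', L = level b T ++ L' ∧ ∀ p ∈ L', b + 1 ≤ p.1 := by
  induction L with
  | nil => exact ⟨∅, [], by simp [level], by simp⟩
  | cons p L ih =>
    obtain ⟨c, l⟩ := p
    obtain ⟨hfirst, hrest⟩ := List.pairwise_cons.1 hL
    obtain ⟨hbc, hbL⟩ := List.forall_mem_cons.1 hb
    rcases hbc.eq_or_lt with rfl | hlt
    · obtain ⟨T, L', rfl, hL'⟩ := ih hrest hbL
      have hT : ∀ l' ∈ T, l' < l := fun l' h => (hfirst (b, l') (by simp [h])).2 rfl
      exact ⟨insert l T, L', by rw [level_insert hT]; rfl, hL'⟩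
    · exact ⟨∅, (c, l) :: L, by simp [level],
        List.forall_mem_cons.2 ⟨hlt, fun q hq => hlt.trans_le (hfirst q hq).1⟩⟩

/-- `L` is a sequence of tiles from `S`, at exponents at least `b`, completing `d * 2 ^ b` to
`2 ^ (b + k)`. -/
structure IsCompletion (S : Finset ℕ) (b d k : ℕ) (L : List (ℕ × ℕ)) : Prop where
  le_fst : ∀ p ∈ L, b ≤ p.1
  snd_mem : ∀ p ∈ L, p.2 ∈ S
  pairwise : L.Pairwise TilePrecedes
  tileSum_add : tileSum L + d * 2 ^ b = 2 ^ (b + k)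

theorem isTiling_two_pow_sub_iff {S : Finset ℕ} {d k : ℕ} {L : List (ℕ × ℕ)} (hd : d ≤ 2 ^ k) :
    IsTiling S (2 ^ k - d) L ↔ IsCompletion S 0 d k L := by
  rw [isTiling_iff_pairwise]
  constructor
  · rintro ⟨hmem, hL, hsum⟩
    exact ⟨fun p _ => Nat.zero_le _, hmem, hL, by rw [hsum]; simpa using Nat.sub_add_cancel hd⟩
  · rintro ⟨-, hmem, hL, hsum⟩
    exact ⟨hmem, hL, Nat.eq_sub_of_add_eq (by simpa using hsum)⟩

/-- One step of binary addition: adding the tiles `T ⊆ S` to the carry `d` at one exponent produces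
the digit `0` and the carry `m` at the next exponent. -/
structure IsCarry (S : Finset ℕ) (d : ℕ) (T : Finset ℕ) (m : ℕ) : Prop where
  subset : T ⊆ S
  add_sum : d + ∑ l ∈ T, l = 2 * m

theorem IsCompletion.exists_carry {S : Finset ℕ} {b d k : ℕ} {L : List (ℕ × ℕ)}
    (hL : IsCompletion S b d (k + 1) L) :
    ∃ T m L', IsCarry S d T m ∧ L = level b T ++ L' ∧ IsCompletion S (b + 1) m k L' := by
  obtain ⟨T, L', rfl, hle⟩ := exists_eq_level_append hL.pairwise hL.le_fst
  obtain ⟨q, hq⟩ := two_pow_dvd_tileSum hle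
  have hsum : d + ∑ l ∈ T, l + 2 * q = 2 * 2 ^ k := by
    have h := hL.tileSum_add
    rw [tileSum_append, tileSum_level, hq] at h
    refine Nat.eq_of_mul_eq_mul_right (Nat.two_pow_pos b) ?_
    rw [pow_succ] at h
    linear_combination h
  refine ⟨T, 2 ^ k - q, L', ⟨fun l hl => hL.snd_mem (b, l) (by simp [hl]), by omega⟩, rfl, hle,
    fun p hp => hL.snd_mem p (List.mem_append_right _ hp), (List.pairwise_append.1 hL.pairwise).2.1,
    ?_⟩
  rw [hq, mul_comm (2 ^ k - q), ← mul_add, Nat.add_sub_cancel' (by omega), ← pow_add]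

/-- A potential on a set `A` of carries, for the tiles in `S`: each carry step costs `β` per tile
and gains `α`, and the potential pays for any excess of the gain over the cost. -/
structure IsPotential (S : Finset ℕ) (α β : ℕ) (A : Finset ℕ) (h : ℕ → ℕ) : Prop where
  mem_of_isCarry : ∀ {d T m}, d ∈ A → IsCarry S d T m → m ∈ A
  le_of_isCarry : ∀ {d T m}, d ∈ A → IsCarry S d T m → α + h m ≤ β * T.card + h d

/-- A carry step for which the inequality defining a potential is an equality. -/
structure IsTightCarry (S : Finset ℕ) (α β : ℕ) (h : ℕ → ℕ) (d : ℕ) (T : Finset ℕ) (m : ℕ) : Prop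
    extends IsCarry S d T m where
  potential_eq : α + h m = β * T.card + h d

section Potential

variable {S A : Finset ℕ} {α β b d k : ℕ} {h : ℕ → ℕ} {L : List (ℕ × ℕ)}

theorem IsPotential.le_of_isCompletion (hh : IsPotential S α β A h) (hd : d ∈ A)
    (hL : IsCompletion S b d k L) : α * k ≤ β * L.length + h d := by
  induction k generalizing b d L with
  | zero => simp
  | succ k ih =>
    obtain ⟨T, m, L', hcarry, rfl, hL'⟩ := hL.exists_carry
    have hstep := hh.le_of_isCarry hd hcarry
    have hrest := ih (hh.mem_of_isCarry hd hcarry) hL'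
    rw [List.length_append, length_level]
    linarith

theorem IsPotential.exists_tight_carry (hh : IsPotential S α β A h) (hd : d ∈ A)
    (hL : IsCompletion S b d (k + 1) L) (htight : β * L.length + h d = α * (k + 1)) :
    ∃ T m L', IsTightCarry S α β h d T m ∧ L = level b T ++ L' ∧
      IsCompletion S (b + 1) m k L' ∧ β * L'.length + h m = α * k := by
  obtain ⟨T, m, L', hcarry, rfl, hL'⟩ := hL.exists_carry
  have hstep := hh.le_of_isCarry hd hcarry
  have hrest := hh.le_of_isCompletion (hh.mem_of_isCarry hd hcarry) hL'
  rw [List.length_append, length_level] at htight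
  exact ⟨T, m, L', ⟨hcarry, by linarith⟩, rfl, hL', by linarith⟩

theorem IsPotential.eq_of_tight (hh : IsPotential S α β A h) (hβ : 0 < β) {O : Finset ℕ}
    (hOA : O ⊆ A) (hO : ∀ {d T m}, d ∈ O → IsTightCarry S α β h d T m → m ∈ O)
    (hunique : ∀ {d T T' m m'}, d ∈ O → IsTightCarry S α β h d T m →
      IsTightCarry S α β h d T' m' → T = T')
    (hd : d ∈ O) {L' : List (ℕ × ℕ)}
    (hL : IsCompletion S b d k L) (htight : β * L.length + h d = α * k)
    (hL' : IsCompletion S b d k L') (htight' : β * L'.length + h d = α * k) : L = L' := by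
  induction k generalizing b d L L' with
  | zero =>
    have eq_nil {M : List (ℕ × ℕ)} (hM : β * M.length + h d = α * 0) : M = [] := by
      simpa [hβ.ne'] using Nat.eq_zero_of_add_eq_zero_right hM
    rw [eq_nil htight, eq_nil htight']
  | succ k ih =>
    obtain ⟨T, m, M, hT, rfl, hM, hMtight⟩ := hh.exists_tight_carry (hOA hd) hL htight
    obtain ⟨T', m', M', hT', rfl, hM', hMtight'⟩ := hh.exists_tight_carry (hOA hd) hL' htight'
    obtain rfl := hunique hd hT hT'
    obtain rfl : m = m' := by have := hT.add_sum; have := hT'.add_sum; omega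
    rw [ih (hO hd hT) hM hMtight hM' hMtight']

end Potential

section Minimal

variable {S : Finset ℕ} {r : ℕ} {L : List (ℕ × ℕ)}

theorem stilde_eq_length (hL : IsTiling S r L)
    (hmin : ∀ M, IsTiling S r M → L.length ≤ M.length) : stilde S r = L.length := by
  refine le_antisymm (sInf_le ⟨L, hL, rfl⟩) (le_sInf ?_)
  rintro _ ⟨M, hM, rfl⟩
  exact_mod_cast hmin M hM

theorem Ktilde_eq_singleton (hL : IsTiling S r L) (hlen : stilde S r = L.length)
    (hunique : ∀ M, IsTiling S r M → M.length = L.length → M = L) : Ktilde S r = {L} := by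
  refine Set.eq_singleton_iff_unique_mem.2 ⟨⟨hL, hlen.symm⟩, fun M ⟨hM, hMlen⟩ => ?_⟩
  exact hunique M hM (by exact_mod_cast hMlen.trans hlen)

end Minimal

/-- The maximum of `2 * k - 5 * L.length` over the completions `L` of `d` to `2 ^ k` by tiles from
`{1, 3, 9, 13}`, tabulated for `1 ≤ d ≤ 25`, with the junk value `0` elsewhere. -/
def carryPotential (d : ℕ) : ℕ :=
  [0, 0, 2, 3, 4, 1, 5, 3, 6, 2, 3, 4, 7, 3, 5, 4, 8, 1, 4, 5, 5, 4, 6, 5, 9, 2].getD d 0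

theorem isPotential_carryPotential :
    IsPotential {1, 3, 9, 13} 2 5 (Finset.Icc 1 25) carryPotential where
  mem_of_isCarry {d T m} hd hcarry := by
    have hT : ∑ l ∈ T, l ≤ 26 := Finset.sum_le_sum_of_subset hcarry.subset
    have := hcarry.add_sum
    rw [Finset.mem_Icc] at hd ⊢
    omega
  le_of_isCarry {d T m} hd hcarry := by
    have table : ∀ d ∈ Finset.Icc 1 25, ∀ T ∈ Finset.powerset {1, 3, 9, 13},
        2 ∣ d + ∑ l ∈ T, l →
          2 + carryPotential ((d + ∑ l ∈ T, l) / 2) ≤ 5 * T.card + carryPotential d := by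
      decide +kernel
    simpa [hcarry.add_sum] using table d hd T (Finset.mem_powerset.2 hcarry.subset)

/-- The carries that occur in a completion of `1` or `4` for which every carry step is tight for
`carryPotential`. -/
def tightOrbit : Finset ℕ := {1, 2, 4, 7, 8}

section TightOrbit

variable {d m m' : ℕ} {T T' : Finset ℕ}

theorem IsTightCarry.eq_ite (hT : IsTightCarry {1, 3, 9, 13} 2 5 carryPotential d T m)
    (hd : d ∈ tightOrbit) : T = if d = 1 then {13} else if d = 7 then {9} else ∅ := by
  have table : ∀ d ∈ tightOrbit, ∀ T ∈ Finset.powerset {1, 3, 9, 13}, 2 ∣ d + ∑ l ∈ T, l →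
      2 + carryPotential ((d + ∑ l ∈ T, l) / 2) = 5 * T.card + carryPotential d →
        T = if d = 1 then {13} else if d = 7 then {9} else ∅ := by
    decide +kernel
  refine table d hd T (Finset.mem_powerset.2 hT.subset) ?_ ?_ <;> rw [hT.add_sum]
  · exact dvd_mul_right 2 m
  · rw [Nat.mul_div_cancel_left m two_pos, hT.potential_eq]

theorem IsTightCarry.mem_tightOrbit
    (hT : IsTightCarry {1, 3, 9, 13} 2 5 carryPotential d T m) (hd : d ∈ tightOrbit) :
    m ∈ tightOrbit := by
  have hsum := hT.add_sum
  rw [hT.eq_ite hd] at hsum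
  simp only [tightOrbit, Finset.mem_insert, Finset.mem_singleton] at hd ⊢
  rcases hd with rfl | rfl | rfl | rfl | rfl <;> simp at hsum <;> omega

theorem IsTightCarry.unique (hT : IsTightCarry {1, 3, 9, 13} 2 5 carryPotential d T m)
    (hT' : IsTightCarry {1, 3, 9, 13} 2 5 carryPotential d T' m') (hd : d ∈ tightOrbit) :
    T = T' :=
  (hT.eq_ite hd).trans (hT'.eq_ite hd).symm

end TightOrbit

/-- The tiling of `n` consecutive blocks of five binary ones, starting at exponent `b`, that covers
each block by `13 + 9 * 2 = 31`. -/
def periodicTiling : ℕ → ℕ → List (ℕ × ℕ)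
  | _, 0 => []
  | b, n + 1 => (b, 13) :: (b + 1, 9) :: periodicTiling (b + 5) n

theorem length_periodicTiling (b n : ℕ) : (periodicTiling b n).length = 2 * n := by
  induction n generalizing b with
  | zero => rfl
  | succ n ih => simp [periodicTiling, ih, mul_add]

theorem isCompletion_periodicTiling (b n : ℕ) :
    IsCompletion {1, 3, 9, 13} b 1 (5 * n) (periodicTiling b n) := by
  induction n generalizing b with
  | zero => constructor <;> simp [periodicTiling, tileSum]
  | succ n ih =>
    obtain ⟨hle, hmem, hpairwise, hsum⟩ := ih (b + 5)
    refine ⟨?_, ?_, ?_, ?_⟩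
    · simp only [periodicTiling, List.forall_mem_cons]
      exact ⟨le_rfl, Nat.le_succ b, fun p hp => (Nat.le_add_right b 5).trans (hle p hp)⟩
    · simp only [periodicTiling, List.forall_mem_cons]
      exact ⟨by simp, by simp, hmem⟩
    · simp only [periodicTiling, List.pairwise_cons, List.forall_mem_cons]
      refine ⟨⟨?_, fun p hp => ?_⟩, fun p hp => ?_, hpairwise⟩
      · simp [TilePrecedes]
      all_goals
        have := hle p hp
        exact ⟨by grind, by grind⟩
    · have hexp : b + 5 * (n + 1) = b + 5 + 5 * n := by ring
      rw [periodicTiling, tileSum_cons, tileSum_cons, hexp, ← hsum]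
      ring

theorem isTiling_periodicTiling (n : ℕ) :
    IsTiling {1, 3, 9, 13} (2 ^ (5 * n + 2) - 4) (periodicTiling 2 n) := by
  obtain ⟨-, hmem, hpairwise, hsum⟩ := isCompletion_periodicTiling 2 n
  rw [add_comm (5 * n) 2, isTiling_iff_pairwise]
  exact ⟨hmem, hpairwise, by omega⟩

theorem stmt7_general (n : ℕ) :
    stilde {1, 3, 9, 13} (2 ^ (5 * n + 2) - 4) = (2 * n : ℕ) ∧
      Ktilde {1, 3, 9, 13} (2 ^ (5 * n + 2) - 4) = {periodicTiling 2 n} := by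
  have hcompletion {L : List (ℕ × ℕ)} (hL : IsTiling {1, 3, 9, 13} (2 ^ (5 * n + 2) - 4) L) :
      IsCompletion {1, 3, 9, 13} 0 4 (5 * n + 2) L :=
    (isTiling_two_pow_sub_iff (Nat.pow_le_pow_right two_pos (Nat.le_add_left 2 _))).1 hL
  have hperiodic := isTiling_periodicTiling n
  have hlen := length_periodicTiling 2 n
  have hfour : carryPotential 4 = 4 := rfl
  have hstilde : stilde {1, 3, 9, 13} (2 ^ (5 * n + 2) - 4) = (periodicTiling 2 n).length := by
    refine stilde_eq_length hperiodic fun L hL => ?_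
    have := isPotential_carryPotential.le_of_isCompletion (by simp) (hcompletion hL)
    omega
  refine ⟨by rw [hstilde, hlen], Ktilde_eq_singleton hperiodic hstilde fun L hL hLlen => ?_⟩
  exact isPotential_carryPotential.eq_of_tight (by norm_num) (O := tightOrbit) (by decide)
    (fun hd hT => hT.mem_tightOrbit hd) (fun hd hT hT' => hT.unique hT' hd) (by decide)
    (hcompletion hL) (by omega) (hcompletion hperiodic) (by omega)

theorem stmt7 :
    (2 ^ 22 - 4 : ℕ) = 9 * 2 ^ 18 + 13 * 2 ^ 17 + 9 * 2 ^ 13 + 13 * 2 ^ 12 +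
      9 * 2 ^ 8 + 13 * 2 ^ 7 + 9 * 2 ^ 3 + 13 * 2 ^ 2 ∧
    stilde {1, 3, 9, 13} (2 ^ 22 - 4) = 8 ∧
    Ktilde {1, 3, 9, 13} (2 ^ 22 - 4) =
      {[(2, 13), (3, 9), (7, 13), (8, 9), (12, 13), (13, 9), (17, 13), (18, 9)]} := by
  exact ⟨by norm_num, stmt7_general 4⟩
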